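/- For every integer s ≥ 1 there exists a constant c > 0, depending only on s, with the following property: for every 2π-periodic function f : ℝ → ℂ of class C^{s+1}, every even integer N ≥ 2 (with h = 2π/N), and every grid index i ∈ {−N/2+1, …, N/2}, the pseudo-spectral derivative of the samples of f satisfies |(S_h f(α_·))(α_i) − f′(α_i)| ≤ c h^{s−1/2} ‖f‖_{s+1}. Moreover, for every filter function ρ the same estimate holds (with c also depending on ρ) with the filtered derivative D_h in place of S_h. -/

import Mathlib

open scoped BigOperators
open Finset

noncomputable section

/-- Grid spacing `h = 2π/N`. -/
def hgrid (N : ℤ) : ℝ := 2 * Real.pi / N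

/-- Grid points `α_j = j h`. -/
def gridPt (N : ℤ) (j : ℤ) : ℝ := j * hgrid N

/-- Index set `{-N/2+1, …, N/2}`. -/
def idxs (N : ℤ) : Finset ℤ := Finset.Icc (-(N / 2) + 1) (N / 2)

/-- Discrete Fourier coefficient `f̂_k`. -/
def dft (N : ℤ) (f : ℤ → ℂ) (k : ℤ) : ℂ :=
  (N : ℂ)⁻¹ * ∑ j ∈ idxs N, f j * Complex.exp (-(Complex.I * (k : ℂ) * (gridPt N j : ℂ)))

/-- Reconstruction of a discrete function from Fourier coefficients. -/
def idft (N : ℤ) (c : ℤ → ℂ) (j : ℤ) : ℂ :=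
  ∑ k ∈ idxs N, c k * Complex.exp (Complex.I * (k : ℂ) * (gridPt N j : ℂ))

/-- The pseudo-spectral derivative `S_h`. -/
def Sh (N : ℤ) (f : ℤ → ℂ) : ℤ → ℂ :=
  idft N fun k => if k = N / 2 then 0 else Complex.I * (k : ℂ) * dft N f k

/-- The pseudo-spectral antiderivative `S_h⁻¹`. -/
def Shinv (N : ℤ) (f : ℤ → ℂ) : ℤ → ℂ :=
  idft N fun k => if k = 0 then 0 else dft N f k / (Complex.I * (k : ℂ))

/-- The filtered discrete function `f^p`. -/
def filterP (N : ℤ) (ρ : ℝ → ℝ) (f : ℤ → ℂ) : ℤ → ℂ :=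
  idft N fun k => (ρ (gridPt N k) : ℂ) * dft N f k

/-- The filtered derivative `D_h`. -/
def Dh (N : ℤ) (ρ : ℝ → ℝ) (f : ℤ → ℂ) : ℤ → ℂ :=
  idft N fun k => Complex.I * (k : ℂ) * (ρ (gridPt N k) : ℂ) * dft N f k

/-- Discrete `l²` norm. -/
def l2norm (N : ℤ) (f : ℤ → ℂ) : ℝ :=
  Real.sqrt (hgrid N * ∑ j ∈ idxs N, ‖f j‖ ^ 2)

/-- Discrete Hilbert transform `H_h`. -/
def Hh (N : ℤ) (f : ℤ → ℂ) (i : ℤ) : ℂ :=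
  ((hgrid N / Real.pi : ℝ) : ℂ) *
    ∑ j ∈ (idxs N).filter (fun j => Odd (j - i)),
      f j * (Real.cot ((gridPt N i - gridPt N j) / 2) : ℂ)

/-- Discrete inner product `(f,g)_h`. -/
def dip (N : ℤ) (f g : ℤ → ℂ) : ℂ :=
  (hgrid N : ℂ) * ∑ j ∈ idxs N, (starRingEnd ℂ) (f j) * g j

/-- Discrete mean `⟨f⟩_h`. -/
def dmean (N : ℤ) (f : ℤ → ℂ) : ℂ :=
  (N : ℂ)⁻¹ * ∑ j ∈ idxs N, f j

/-- The discrete function of samples of a periodic function. -/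
def samples (N : ℤ) (f : ℝ → ℂ) : ℤ → ℂ := fun j => f (gridPt N j)

/-- Fourier coefficient of a `2π`-periodic function. -/
def fourierCoeffP (f : ℝ → ℂ) (k : ℤ) : ℂ :=
  ((2 * Real.pi)⁻¹ : ℝ) * ∫ α in (-Real.pi)..Real.pi, f α * Complex.exp (-(Complex.I * (k : ℂ) * (α : ℂ)))

/-- Sobolev norm `‖f‖_s`. -/
def sobolevNorm (s : ℕ) (f : ℝ → ℂ) : ℝ :=
  Real.sqrt (∑' k : ℤ, (1 + (k : ℝ) ^ 2) ^ s * ‖fourierCoeffP f k‖ ^ 2)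

/-- A filter (cutoff) function for numerical filtering. -/
structure IsFilter (ρ : ℝ → ℝ) : Prop where
  even : ∀ x, ρ (-x) = ρ x
  nonneg : ∀ x, 0 ≤ ρ x
  smooth : ∃ r : ℕ, 2 < r ∧ ContDiff ℝ r ρ
  zero_at_pi : ρ Real.pi = 0
  zero_at_neg_pi : ρ (-Real.pi) = 0
  deriv_zero_at_pi : deriv ρ Real.pi = 0
  deriv_zero_at_neg_pi : deriv ρ (-Real.pi) = 0
  one_near_zero : ∃ μ : ℝ, 0 < μ ∧ μ < 1 ∧ ∀ x : ℝ, |x| ≤ μ * Real.pi → ρ x = 1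

open Complex in
/-- The integral defining `fourierCoeffP` is the Mathlib Fourier coefficient of the function
induced on the circle. -/
lemma exists_circle_lift {f : ℝ → ℂ} (hf : Function.Periodic f (2 * Real.pi)) (hc : Continuous f)
    [Fact (0 < 2 * Real.pi)] :
    ∃ F : C(AddCircle (2 * Real.pi), ℂ), (∀ x : ℝ, F x = f x) ∧
      ∀ k, fourierCoeff F k = fourierCoeffP f k := by
  refine ⟨⟨hf.lift, continuous_coinduced_dom.mpr hc⟩, fun x => rfl, fun k => ?_⟩
  rw [fourierCoeff_eq_intervalIntegral _ _ (-Real.pi), fourierCoeffP,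
    show -Real.pi + 2 * Real.pi = Real.pi by ring, real_smul, one_div]
  congr 1
  refine intervalIntegral.integral_congr fun x _ => ?_
  have hpi : (Real.pi : ℂ) ≠ 0 := by exact_mod_cast Real.pi_ne_zero
  simp only [ContinuousMap.coe_mk, Function.Periodic.lift_coe, smul_eq_mul, fourier_coe_apply]
  rw [mul_comm]
  congr 2
  push_cast
  field_simp

/-- Bessel's inequality, as a summability statement. -/
lemma summable_sq_fourierCoeffP {f : ℝ → ℂ} (hf : Function.Periodic f (2 * Real.pi))
    (hc : Continuous f) : Summable fun k => ‖fourierCoeffP f k‖ ^ 2 := by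
  have : Fact (0 < 2 * Real.pi) := ⟨Real.two_pi_pos⟩
  obtain ⟨F, -, hF⟩ := exists_circle_lift hf hc
  have h := (hasSum_sq_fourierCoeff (ContinuousMap.toLp 2 AddCircle.haarAddCircle ℂ F)).summable
  simpa only [fourierCoeff_toLp, hF] using h

open Complex in
lemma hasSum_fourierCoeffP {f : ℝ → ℂ} (hf : Function.Periodic f (2 * Real.pi))
    (hc : Continuous f) (hs : Summable (fourierCoeffP f)) (x : ℝ) :
    HasSum (fun k : ℤ => fourierCoeffP f k * exp (I * k * x)) (f x) := by
  have : Fact (0 < 2 * Real.pi) := ⟨Real.two_pi_pos⟩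
  obtain ⟨F, hFf, hF⟩ := exists_circle_lift hf hc
  have hF' : fourierCoeff F = fourierCoeffP f := funext hF
  have h := has_pointwise_sum_fourier_series_of_summable (f := F) (hF' ▸ hs) x
  have hpi : (Real.pi : ℂ) ≠ 0 := by exact_mod_cast Real.pi_ne_zero
  rw [hFf] at h
  refine h.congr_fun fun k => ?_
  rw [hF, smul_eq_mul, fourier_coe_apply]
  congr 2
  push_cast
  field_simp

lemma periodic_deriv {f : ℝ → ℂ} {T : ℝ} (hf : Function.Periodic f T) :
    Function.Periodic (deriv f) T := fun x => by
  rw [← deriv_comp_add_const, show (fun y => f (y + T)) = f from funext hf]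

open Complex in
lemma fourierCoeffP_deriv {f : ℝ → ℂ} (hf : Function.Periodic f (2 * Real.pi))
    (hc : ContDiff ℝ 1 f) (k : ℤ) :
    fourierCoeffP (deriv f) k = I * k * fourierCoeffP f k := by
  have hd : ∀ x : ℝ, HasDerivAt (fun α : ℝ => exp (-(I * k * α)))
      (-(I * k) * exp (-(I * k * x))) x := fun x => by
    have h1 : HasDerivAt (fun α : ℝ => -(I * k * (α : ℂ))) (-(I * k)) x := by
      simpa using ((hasDerivAt_id (x : ℂ)).const_mul (I * k)).neg.comp_ofReal
    simpa [mul_comm] using h1.cexp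
  have hparts := intervalIntegral.integral_mul_deriv_eq_deriv_mul
    (a := -Real.pi) (b := Real.pi)
    (fun x _ => hd x) (fun x _ => (hc.differentiable one_ne_zero x).hasDerivAt)
    (Continuous.intervalIntegrable (by fun_prop) _ _)
    ((hc.continuous_deriv le_rfl).intervalIntegrable _ _)
  have hb : f Real.pi = f (-Real.pi) := by
    rw [← hf (-Real.pi)]; congr 1; ring
  have he : exp (-(I * k * (Real.pi : ℝ))) = exp (-(I * k * ((-Real.pi : ℝ) : ℂ))) := by
    rw [exp_eq_exp_iff_exists_int]
    exact ⟨-k, by push_cast; ring⟩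
  rw [hb, he, sub_self, zero_sub] at hparts
  simp only [fourierCoeffP]
  simp_rw [mul_comm (deriv f _)]
  rw [hparts, ← intervalIntegral.integral_neg, mul_left_comm,
    ← intervalIntegral.integral_const_mul (I * k)]
  congr 1
  refine intervalIntegral.integral_congr fun x _ => ?_
  ring

open Complex in
lemma fourierCoeffP_iteratedDeriv (n : ℕ) {f : ℝ → ℂ} (hf : Function.Periodic f (2 * Real.pi))
    (hc : ContDiff ℝ n f) (k : ℤ) :
    fourierCoeffP (iteratedDeriv n f) k = (I * k) ^ n * fourierCoeffP f k := by
  induction n generalizing f with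
  | zero => simp
  | succ n ih =>
    have hc' : ContDiff ℝ n (deriv f) := by
      rw [Nat.cast_succ, contDiff_succ_iff_deriv] at hc
      exact hc.2.2
    rw [iteratedDeriv_succ', ih (periodic_deriv hf) hc',
      fourierCoeffP_deriv hf (hc.of_le (by exact_mod_cast Nat.le_add_left 1 n))]
    ring

lemma periodic_iteratedDeriv (n : ℕ) {f : ℝ → ℂ} {T : ℝ} (hf : Function.Periodic f T) :
    Function.Periodic (iteratedDeriv n f) T := by
  induction n generalizing f with
  | zero => simpa using hf
  | succ n ih => rw [iteratedDeriv_succ']; exact ih (periodic_deriv hf)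

/-- The series defining the Sobolev norm of a `C^n` periodic function converges. -/
lemma summable_sobolev (n : ℕ) {f : ℝ → ℂ} (hf : Function.Periodic f (2 * Real.pi))
    (hc : ContDiff ℝ n f) :
    Summable fun k : ℤ => (1 + (k : ℝ) ^ 2) ^ n * ‖fourierCoeffP f k‖ ^ 2 := by
  have h := (summable_sq_fourierCoeffP (periodic_iteratedDeriv n hf)
    (hc.continuous_iteratedDeriv n le_rfl)).mul_left ((2 : ℝ) ^ n)
  refine h.of_norm_bounded_eventually ?_
  filter_upwards [(Set.finite_singleton (0 : ℤ)).compl_mem_cofinite] with k hk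
  have hk1 : (1 : ℝ) ≤ (k : ℝ) ^ 2 := by
    have : 0 < k ^ 2 := sq_pos_of_ne_zero (by simpa using hk)
    exact_mod_cast this
  rw [Real.norm_of_nonneg (by positivity), fourierCoeffP_iteratedDeriv n hf hc, norm_mul, mul_pow,
    ← mul_assoc]
  gcongr
  rw [norm_pow, ← pow_mul, mul_comm n 2, pow_mul, ← mul_pow]
  gcongr
  simp only [norm_mul, Complex.norm_I, one_mul, Complex.norm_intCast, sq_abs]
  linarith

lemma sum_inv_sq_le_of_injOn {t : Finset ℤ} {x : ℝ} (hx : 0 < x)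
    (ht : ∀ k ∈ t, x ≤ |(k : ℝ)|) (hinj : Set.InjOn Int.natAbs t) :
    ∑ k ∈ t, ((k : ℝ) ^ 2)⁻¹ ≤ 2 / x := by
  obtain ⟨n, hn⟩ : ∃ n, ⌈x⌉₊ = n + 1 :=
    Nat.exists_eq_succ_of_ne_zero (Nat.ceil_pos.mpr hx).ne'
  have hsub : t.image Int.natAbs ⊆ Ioo n ((t.image Int.natAbs).sup id + 1) := fun m hm => by
    obtain ⟨k, hk, rfl⟩ := Finset.mem_image.mp hm
    refine Finset.mem_Ioo.mpr ⟨?_, Nat.lt_succ_of_le (Finset.le_sup (f := id) hm)⟩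
    have h1 : ⌈x⌉₊ ≤ k.natAbs := Nat.ceil_le.mpr (by
      rw [Nat.cast_natAbs, Int.cast_abs]; exact ht k hk)
    omega
  calc ∑ k ∈ t, ((k : ℝ) ^ 2)⁻¹ = ∑ m ∈ t.image Int.natAbs, ((m : ℝ) ^ 2)⁻¹ := by
        rw [Finset.sum_image hinj]
        refine Finset.sum_congr rfl fun k _ => ?_
        rw [Nat.cast_natAbs, Int.cast_abs, sq_abs]
    _ ≤ ∑ m ∈ Ioo n ((t.image Int.natAbs).sup id + 1), ((m : ℝ) ^ 2)⁻¹ :=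
        Finset.sum_le_sum_of_subset_of_nonneg hsub fun _ _ _ => by positivity
    _ ≤ 2 / ((n : ℝ) + 1) := sum_Ioo_inv_sq_le _ _
    _ ≤ 2 / x := by
        have := Nat.le_ceil x
        rw [hn] at this
        push_cast at this
        gcongr

lemma sum_inv_sq_le {t : Finset ℤ} {x : ℝ} (hx : 0 < x) (ht : ∀ k ∈ t, x ≤ |(k : ℝ)|) :
    ∑ k ∈ t, ((k : ℝ) ^ 2)⁻¹ ≤ 4 / x := by
  rw [← Finset.sum_filter_add_sum_filter_not t (fun k => 0 ≤ k),
    show (4 : ℝ) / x = 2 / x + 2 / x by ring]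
  refine add_le_add (sum_inv_sq_le_of_injOn hx (fun k hk => ht k (Finset.mem_filter.mp hk).1) ?_)
    (sum_inv_sq_le_of_injOn hx (fun k hk => ht k (Finset.mem_filter.mp hk).1) ?_)
  all_goals
    intro a ha b hb hab
    have ha' := (Finset.mem_filter.mp ha).2
    have hb' := (Finset.mem_filter.mp hb).2
    omega

/-- Cauchy–Schwarz estimate of the high-frequency part of `∑ |k| w_k` by a Sobolev sum. -/
lemma sum_abs_mul_le {s : ℕ} (hs : 1 ≤ s) {w : ℤ → ℝ}
    (hsum : Summable fun k : ℤ => (1 + (k : ℝ) ^ 2) ^ (s + 1) * w k ^ 2)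
    {t : Finset ℤ} {x : ℝ} (hx : 0 < x) (ht : ∀ k ∈ t, x ≤ |(k : ℝ)|) :
    ∑ k ∈ t, |(k : ℝ)| * w k ≤
      2 * x⁻¹ ^ ((s : ℝ) - 1 / 2) *
        √(∑' k : ℤ, (1 + (k : ℝ) ^ 2) ^ (s + 1) * w k ^ 2) := by
  have hpos : ∀ k ∈ t, 0 < |(k : ℝ)| := fun k hk => hx.trans_le (ht k hk)
  calc ∑ k ∈ t, |(k : ℝ)| * w k
      = ∑ k ∈ t, (|(k : ℝ)| ^ s)⁻¹ * (|(k : ℝ)| ^ (s + 1) * w k) := by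
        refine Finset.sum_congr rfl fun k hk => ?_
        have := (hpos k hk).ne'
        field_simp
        ring
    _ ≤ √(∑ k ∈ t, ((|(k : ℝ)| ^ s)⁻¹) ^ 2) * √(∑ k ∈ t, (|(k : ℝ)| ^ (s + 1) * w k) ^ 2) :=
        Real.sum_mul_le_sqrt_mul_sqrt _ _ _
    _ ≤ _ := by
        refine mul_le_mul ?_ (Real.sqrt_le_sqrt ?_) (Real.sqrt_nonneg _) (by positivity)
        · rw [Real.sqrt_le_left (by positivity)]
          obtain ⟨m, rfl⟩ : ∃ m, s = m + 1 := ⟨s - 1, by omega⟩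
          have hr : (x⁻¹ ^ (((m + 1 : ℕ) : ℝ) - 1 / 2)) ^ 2 = x⁻¹ ^ (2 * m) * x⁻¹ := by
            rw [← Real.rpow_natCast, ← Real.rpow_mul (by positivity), ← pow_succ,
              ← Real.rpow_natCast]
            congr 1
            push_cast
            ring
          rw [mul_pow, hr]
          calc ∑ k ∈ t, ((|(k : ℝ)| ^ (m + 1))⁻¹) ^ 2
              ≤ ∑ k ∈ t, x⁻¹ ^ (2 * m) * ((k : ℝ) ^ 2)⁻¹ := by
                refine Finset.sum_le_sum fun k hk => ?_
                rw [show ((|(k : ℝ)| ^ (m + 1))⁻¹) ^ 2 = |(k : ℝ)|⁻¹ ^ (2 * m) * (|(k : ℝ)| ^ 2)⁻¹ by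
                  rw [← inv_pow, ← inv_pow]; ring, sq_abs]
                have := ht k hk
                gcongr
            _ ≤ x⁻¹ ^ (2 * m) * (4 / x) := by
                rw [← Finset.mul_sum]
                gcongr
                exact sum_inv_sq_le hx ht
            _ = _ := by ring
        · refine le_trans (Finset.sum_le_sum fun k _ => ?_)
            (hsum.sum_le_tsum t fun k _ => by positivity)
          rw [mul_pow, ← pow_mul, mul_comm (s + 1) 2, pow_mul, sq_abs]
          gcongr
          linarith

lemma summable_abs_mul {s : ℕ} (hs : 1 ≤ s) {w : ℤ → ℝ} (hw : ∀ k, 0 ≤ w k)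
    (hsum : Summable fun k : ℤ => (1 + (k : ℝ) ^ 2) ^ (s + 1) * w k ^ 2) :
    Summable fun k : ℤ => |(k : ℝ)| * w k := by
  refine summable_of_sum_le (c := 2 * (1 : ℝ)⁻¹ ^ ((s : ℝ) - 1 / 2) *
    √(∑' k : ℤ, (1 + (k : ℝ) ^ 2) ^ (s + 1) * w k ^ 2))
    (fun k => mul_nonneg (abs_nonneg _) (hw k)) fun t => ?_
  rw [← Finset.sum_filter_of_ne (p := fun k : ℤ => k ≠ 0)
    (fun k _ hk => by rintro rfl; simp at hk)]
  refine sum_abs_mul_le hs hsum one_pos fun k hk => ?_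
  exact_mod_cast Int.one_le_abs (Finset.mem_filter.mp hk).2

lemma hgrid_mul {N : ℤ} (hN : 2 ≤ N) : (N : ℂ) * (hgrid N : ℂ) = 2 * Real.pi := by
  have : (N : ℂ) ≠ 0 := by exact_mod_cast (by omega : N ≠ 0)
  rw [hgrid]
  push_cast
  field_simp

open Complex in
/-- Frequencies which agree modulo `N` are indistinguishable on the grid. -/
lemma exp_grid_congr {N : ℤ} (hN : 2 ≤ N) {k r : ℤ} (h : N ∣ k - r) (j : ℤ) :
    exp (I * k * gridPt N j) = exp (I * r * gridPt N j) := by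
  obtain ⟨m, hm⟩ := h
  obtain rfl : k = r + N * m := by omega
  rw [exp_eq_exp_iff_exists_int]
  refine ⟨m * j, ?_⟩
  rw [gridPt]
  push_cast
  linear_combination I * m * j * hgrid_mul hN

open Complex in
/-- Discrete orthogonality of the exponentials. -/
lemma sum_exp_grid {N : ℤ} (hN : 2 ≤ N) (hE : Even N) {m : ℤ} (hm : ¬ N ∣ m) :
    ∑ j ∈ idxs N, exp (I * m * gridPt N j) = 0 := by
  set a : ℤ := -(N / 2) + 1 with ha
  have hidx : idxs N = (Finset.range N.toNat).image (fun n : ℕ => (n : ℤ) + a) := by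
    obtain ⟨M, rfl⟩ := hE
    ext j
    simp only [idxs, Finset.mem_Icc, Finset.mem_image, Finset.mem_range]
    constructor
    · intro h
      exact ⟨(j - a).toNat, by omega, by omega⟩
    · rintro ⟨n, hn, rfl⟩
      omega
  set ω : ℂ := exp (I * m * hgrid N) with hω
  have hterm : ∀ n : ℕ, exp (I * m * gridPt N ((n : ℤ) + a)) = exp (I * m * gridPt N a) * ω ^ n := by
    intro n
    rw [hω, ← exp_nat_mul, ← exp_add]
    congr 1
    simp only [gridPt]
    push_cast
    ring
  have hω1 : ω ≠ 1 := fun h => by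
    obtain ⟨n, hn⟩ := exp_eq_one_iff.mp h
    refine hm ⟨n, ?_⟩
    have h2 : (2 * Real.pi * I : ℂ) ≠ 0 := two_pi_I_ne_zero
    have h3 : (2 * Real.pi * I : ℂ) * m = (2 * Real.pi * I) * (N * n) := by
      linear_combination (N : ℂ) * hn - I * m * hgrid_mul hN
    exact_mod_cast mul_left_cancel₀ h2 h3
  have hωN : ω ^ N.toNat = 1 := by
    rw [hω, ← exp_nat_mul, exp_eq_one_iff]
    refine ⟨m, ?_⟩
    have hcast : ((N.toNat : ℕ) : ℂ) = N := by
      exact_mod_cast congrArg (Int.cast : ℤ → ℂ) (Int.toNat_of_nonneg (by omega : 0 ≤ N))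
    rw [hcast]
    linear_combination I * m * hgrid_mul hN
  rw [hidx, Finset.sum_image (fun x _ y _ h => by simpa using h)]
  simp_rw [hterm]
  rw [← Finset.mul_sum, geom_sum_eq hω1, hωN, sub_self, zero_div, mul_zero]

lemma card_idxs {N : ℤ} (hN : 2 ≤ N) (hE : Even N) : ((idxs N).card : ℂ) = N := by
  obtain ⟨M, rfl⟩ := hE
  have h : ((idxs (M + M)).card : ℤ) = M + M := by
    rw [idxs, Int.card_Icc]
    omega
  exact_mod_cast congrArg (Int.cast : ℤ → ℂ) h

open Complex in
lemma dft_exp {N : ℤ} (hN : 2 ≤ N) (hE : Even N) (k l : ℤ) :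
    dft N (fun j => exp (I * k * gridPt N j)) l = if N ∣ k - l then 1 else 0 := by
  have hNC : (N : ℂ) ≠ 0 := by exact_mod_cast (by omega : N ≠ 0)
  have hmul : ∀ j : ℤ, exp (I * k * gridPt N j) * exp (-(I * l * gridPt N j)) =
      exp (I * (k - l : ℤ) * gridPt N j) := fun j => by
    rw [← exp_add]
    push_cast
    ring_nf
  simp only [dft, hmul]
  split_ifs with h
  · have : ∀ j : ℤ, exp (I * (k - l : ℤ) * gridPt N j) = 1 := fun j => by
      rw [exp_grid_congr hN (r := 0) (by simpa using h)]
      simp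
    simp only [this, Finset.sum_const, nsmul_eq_mul, mul_one, card_idxs hN hE]
    exact inv_mul_cancel₀ hNC
  · rw [sum_exp_grid hN hE h, mul_zero]

/-- The representative of `k` modulo `N` in the index set. -/
lemma exists_alias {N : ℤ} (hN : 2 ≤ N) (hE : Even N) (k : ℤ) :
    ∃ r ∈ idxs N, ∀ l ∈ idxs N, N ∣ k - l ↔ l = r := by
  obtain ⟨M, rfl⟩ := hE
  have h0 := Int.emod_nonneg (k + M - 1) (by omega : M + M ≠ 0)
  have h1 := Int.emod_lt_of_pos (k + M - 1) (by omega : 0 < M + M)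
  have h2 := Int.mul_ediv_add_emod (k + M - 1) (M + M)
  set r := (k + M - 1) % (M + M) - M + 1 with hr
  have hrm : r ∈ idxs (M + M) := by
    rw [idxs, Finset.mem_Icc]
    omega
  have hd : M + M ∣ k - r := ⟨(k + M - 1) / (M + M), by omega⟩
  refine ⟨r, hrm, fun l hl => ⟨fun h => ?_, fun h => h ▸ hd⟩⟩
  have h3 : M + M ∣ l - r := by
    have := dvd_sub hd h
    rwa [show k - r - (k - l) = l - r by ring] at this
  rw [idxs, Finset.mem_Icc] at hl hrm
  have := Int.eq_zero_of_abs_lt_dvd h3 (by rw [abs_lt]; omega)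
  omega

open Complex in
/-- Accuracy of a Fourier multiplier `σ` which agrees with differentiation at frequencies below
`μ N / 2` and is of size at most `B N`. -/
lemma multiplier_accuracy {s : ℕ} (hs : 1 ≤ s) {μ B : ℝ} (hμ : 0 < μ) (hμ1 : μ ≤ 1) (hB : 0 ≤ B)
    {f : ℝ → ℂ} (hf : Function.Periodic f (2 * Real.pi)) (hc : ContDiff ℝ (s + 1 : ℕ) f)
    {N : ℤ} (hN : 2 ≤ N) (hE : Even N) {σ : ℤ → ℂ}
    (hσ : ∀ k : ℤ, |(k : ℝ)| < μ * N / 2 → σ k = I * k)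
    (hσB : ∀ k ∈ idxs N, ‖σ k‖ ≤ B * N) (i : ℤ) :
    ‖idft N (fun k => σ k * dft N (samples N f) k) i - deriv f (gridPt N i)‖ ≤
      (2 * B / μ + 1) * 2 * (μ * Real.pi)⁻¹ ^ ((s : ℝ) - 1 / 2) *
        hgrid N ^ ((s : ℝ) - 1 / 2) * sobolevNorm (s + 1) f := by
  have hNR : (2 : ℝ) ≤ N := by exact_mod_cast hN
  have hsob := summable_sobolev (s + 1) hf hc
  have habs := summable_abs_mul hs (fun k => norm_nonneg (fourierCoeffP f k)) hsob
  have hc1 : ContDiff ℝ 1 f := hc.of_le (by exact_mod_cast Nat.le_add_left 1 s)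
  have hcoef : Summable (fourierCoeffP f) := by
    refine habs.of_norm_bounded_eventually ?_
    filter_upwards [(Set.finite_singleton (0 : ℤ)).compl_mem_cofinite] with k hk
    refine le_mul_of_one_le_left (norm_nonneg _) ?_
    exact_mod_cast Int.one_le_abs hk
  have hcoef' : Summable (fourierCoeffP (deriv f)) := by
    refine Summable.of_norm (habs.congr fun k => ?_)
    rw [fourierCoeffP_deriv hf hc1]
    simp
  have hderiv := hasSum_fourierCoeffP (periodic_deriv hf) (hc1.continuous_deriv le_rfl) hcoef'
    (gridPt N i)
  have hdft : ∀ l, HasSum (fun k : ℤ => fourierCoeffP f k * if N ∣ k - l then 1 else 0)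
      (dft N (samples N f) l) := fun l => by
    have h := (hasSum_sum (s := idxs N) fun j _ =>
      (hasSum_fourierCoeffP hf hc.continuous hcoef (gridPt N j)).mul_right
        (exp (-(I * l * gridPt N j)))).mul_left (N : ℂ)⁻¹
    refine h.congr_fun fun k => ?_
    rw [← dft_exp hN hE, dft, mul_left_comm, Finset.mul_sum]
    simp only [mul_assoc]
  choose r hr hrl using exists_alias hN hE
  have hidft : HasSum (fun k : ℤ => fourierCoeffP f k * (σ (r k) * exp (I * k * gridPt N i)))
      (idft N (fun k => σ k * dft N (samples N f) k) i) := by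
    have h := hasSum_sum (s := idxs N) fun l _ =>
      ((hdft l).mul_left (σ l)).mul_right (exp (I * l * gridPt N i))
    refine h.congr_fun fun k => ?_
    rw [Finset.sum_eq_single_of_mem (r k) (hr k) fun l hl hne => by
        rw [if_neg fun h => hne ((hrl k l hl).mp h)]; simp,
      if_pos ((hrl k _ (hr k)).mpr rfl), exp_grid_congr hN ((hrl k _ (hr k)).mpr rfl)]
    ring
  set x : ℝ := μ * N / 2 with hx
  have hx0 : 0 < x := by positivity
  set C : ℝ := 2 * B / μ + 1 with hC
  have hC0 : 0 ≤ C := by positivity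
  have hterm : ∀ k : ℤ, ‖fourierCoeffP f k * (σ (r k) * exp (I * k * gridPt N i)) -
      fourierCoeffP (deriv f) k * exp (I * k * gridPt N i)‖ ≤
      if x ≤ |(k : ℝ)| then C * (|(k : ℝ)| * ‖fourierCoeffP f k‖) else 0 := fun k => by
    have hexp : ‖exp (I * k * gridPt N i)‖ = 1 := by
      rw [show I * k * gridPt N i = ((k * gridPt N i : ℝ) : ℂ) * I by push_cast; ring,
        norm_exp_ofReal_mul_I]
    rw [fourierCoeffP_deriv hf hc1, show ∀ a b c d : ℂ, a * (b * c) - d * a * c =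
      (b - d) * a * c by intros; ring, norm_mul, norm_mul, hexp, mul_one, ← mul_assoc]
    split_ifs with hk
    · gcongr
      have hBN : B * N ≤ 2 * B / μ * |(k : ℝ)| := by
        calc B * N = 2 * B / μ * x := by rw [hx]; field_simp
          _ ≤ _ := by gcongr
      calc ‖σ (r k) - I * k‖ ≤ ‖σ (r k)‖ + ‖I * (k : ℂ)‖ := norm_sub_le _ _
        _ ≤ B * N + |(k : ℝ)| := by
          gcongr
          · exact hσB _ (hr k)
          · simp
        _ ≤ C * |(k : ℝ)| := by rw [hC]; linarith
    · have hk' : |(k : ℝ)| < N / 2 := by nlinarith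
      have hkm : k ∈ idxs N := by
        obtain ⟨M, rfl⟩ := hE
        have h3 : |k| < M := by
          have : (|k| : ℝ) < M := by push_cast at hk'; linarith
          exact_mod_cast this
        rw [abs_lt] at h3
        rw [idxs, Finset.mem_Icc]
        omega
      rw [← (hrl k k hkm).mp (by simp), hσ k (not_le.mp hk)]
      simp
  refine le_trans (b := C * (2 * x⁻¹ ^ ((s : ℝ) - 1 / 2) * sobolevNorm (s + 1) f))
    (le_of_tendsto (hidft.sub hderiv).norm (.of_forall fun t => ?_)) ?_
  · refine (norm_sum_le _ _).trans ((Finset.sum_le_sum fun k _ => hterm k).trans ?_)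
    rw [← Finset.sum_filter, ← Finset.mul_sum]
    gcongr
    exact sum_abs_mul_le hs hsob hx0 fun k hk => (Finset.mem_filter.mp hk).2
  · have hh : 0 ≤ hgrid N := by rw [hgrid]; positivity
    have hxh : x⁻¹ = (μ * Real.pi)⁻¹ * hgrid N := by
      rw [hx, hgrid]
      have := Real.pi_ne_zero
      field_simp
    rw [hxh, Real.mul_rpow (by positivity) hh]
    exact le_of_eq (by ring)

lemma abs_le_half_of_mem_idxs {N : ℤ} (hE : Even N) {k : ℤ} (hk : k ∈ idxs N) :
    |(k : ℝ)| ≤ N / 2 := by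
  obtain ⟨M, rfl⟩ := hE
  rw [idxs, Finset.mem_Icc] at hk
  have h : |k| ≤ M := abs_le.mpr ⟨by omega, by omega⟩
  have h' : |(k : ℝ)| ≤ M := by exact_mod_cast h
  push_cast
  linarith

/-- Lemma 5.1: spectral accuracy of the pseudo-spectral derivative `S_h`
and of the filtered derivative `D_h`. -/
theorem pseudospectral_derivative_accuracy (s : ℕ) (hs : 1 ≤ s) :
    (∃ c : ℝ, 0 < c ∧ ∀ f : ℝ → ℂ, Function.Periodic f (2 * Real.pi) →
      ContDiff ℝ (s + 1 : ℕ) f →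
      ∀ N : ℤ, 2 ≤ N → Even N → ∀ i ∈ idxs N,
        ‖Sh N (samples N f) i - deriv f (gridPt N i)‖ ≤
          c * hgrid N ^ ((s : ℝ) - 1 / 2) * sobolevNorm (s + 1) f) ∧
    (∀ ρ : ℝ → ℝ, IsFilter ρ →
      ∃ c : ℝ, 0 < c ∧ ∀ f : ℝ → ℂ, Function.Periodic f (2 * Real.pi) →
        ContDiff ℝ (s + 1 : ℕ) f →
        ∀ N : ℤ, 2 ≤ N → Even N → ∀ i ∈ idxs N,
          ‖Dh N ρ (samples N f) i - deriv f (gridPt N i)‖ ≤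
            c * hgrid N ^ ((s : ℝ) - 1 / 2) * sobolevNorm (s + 1) f) := by

  constructor
  · refine ⟨(2 * (1 / 2) / 1 + 1) * 2 * (1 * Real.pi)⁻¹ ^ ((s : ℝ) - 1 / 2), by positivity,
      fun f hf hc N hN hE i _ => ?_⟩
    have hNR : (2 : ℝ) ≤ N := by exact_mod_cast hN
    have h := multiplier_accuracy hs one_pos le_rfl (by norm_num : (0 : ℝ) ≤ 1 / 2) hf hc hN hE
      (σ := fun k => if k = N / 2 then 0 else Complex.I * k) (fun k hk => ?_) (fun k hk => ?_) i
    · simpa only [Sh, ite_mul, zero_mul] using h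
    · refine if_neg ?_
      rintro rfl
      obtain ⟨M, rfl⟩ := hE
      rw [show (M + M) / 2 = M by omega] at hk
      have := le_abs_self (M : ℝ)
      push_cast at hk
      linarith
    · have := abs_le_half_of_mem_idxs hE hk
      split_ifs
      · rw [norm_zero]; positivity
      · simp only [norm_mul, Complex.norm_I, one_mul, Complex.norm_intCast]
        linarith
  · intro ρ hρ
    obtain ⟨μ, hμ, hμ1, hone⟩ := hρ.one_near_zero
    obtain ⟨r, -, hr⟩ := hρ.smooth
    obtain ⟨A, hA⟩ := (isCompact_Icc (a := -Real.pi) (b := Real.pi)).exists_bound_of_continuousOn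
      hr.continuous.continuousOn
    have hA0 : 0 ≤ A := (norm_nonneg _).trans
      (hA 0 ⟨by linarith [Real.pi_pos], Real.pi_pos.le⟩)
    refine ⟨(2 * (A / 2) / μ + 1) * 2 * (μ * Real.pi)⁻¹ ^ ((s : ℝ) - 1 / 2), by positivity,
      fun f hf hc N hN hE i _ => ?_⟩
    have hNR : (2 : ℝ) ≤ N := by exact_mod_cast hN
    have hgrid_abs : ∀ k : ℤ, |gridPt N k| = |(k : ℝ)| * (2 * Real.pi / N) := fun k => by
      rw [gridPt, hgrid, abs_mul, abs_of_nonneg (by positivity : (0 : ℝ) ≤ 2 * Real.pi / N)]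
    exact multiplier_accuracy hs hμ hμ1.le (by positivity : 0 ≤ A / 2) hf hc hN hE
      (σ := fun k => Complex.I * k * (ρ (gridPt N k) : ℂ)) (fun k hk => by
        have hle : |gridPt N k| ≤ μ * Real.pi := by
          rw [hgrid_abs]
          calc |(k : ℝ)| * (2 * Real.pi / N) ≤ μ * N / 2 * (2 * Real.pi / N) := by gcongr
            _ = μ * Real.pi := by field_simp
        simp [hone _ hle]) (fun k hk => by
        have hk2 := abs_le_half_of_mem_idxs hE hk
        have hle : |gridPt N k| ≤ Real.pi := by
          rw [hgrid_abs]
          calc |(k : ℝ)| * (2 * Real.pi / N) ≤ N / 2 * (2 * Real.pi / N) := by gcongr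
            _ = Real.pi := by field_simp
        simp only [norm_mul, Complex.norm_I, one_mul, Complex.norm_intCast, Complex.norm_real]
        calc |(k : ℝ)| * ‖ρ (gridPt N k)‖ ≤ N / 2 * A := by
              gcongr
              exact hA _ (abs_le.mp hle)
          _ = A / 2 * N := by ring) i

end
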